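/- Let G be a locally compact topological group with left Haar measure λ and right Haar measure ρ given by ρ(B) = λ(B⁻¹). Let P and Q be probability measures on G with densities p and q with respect to λ, and for g, h ∈ G write p_g(h) := p(g⁻¹h) and q_g(h) := q(g⁻¹h). Let N and L be compact subsets of G with L symmetric (L = L⁻¹) and P(L) > 0. Then for every h ∈ N, the ratio of the ρ-integrals over NL satisfies [∫_{NL} q_g(h) dρ(g)] / [∫_{NL} p_g(h) dρ(g)] ≤ 1/P(L); equivalently, the logarithm of this ratio is at most −log P(L). -/

import Mathlib

open MeasureTheory Filter
open scoped Pointwise ENNReal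

/-!
The map `g ↦ g⁻¹ * h` carries right Haar measure to the right translate by `h` of left Haar
measure, which on relatively compact sets is left Haar measure scaled by the modular character at
`h`. The two integrals over `N * L` are therefore `Q D` and `P D`, up to this common factor, where
`D = (N * L)⁻¹ * {h}`. Since `h ∈ N`, the set `D` contains `L⁻¹ = L`, so that `P L ≤ P D`, while
`Q D ≤ 1`.
-/

section CompactSets

variable {X : Type*} [TopologicalSpace X] [R1Space X] [MeasurableSpace X] [BorelSpace X]

theorem restrict_closure_of_isCompact (μ : Measure X) {K : Set X} (hK : IsCompact K) :
    μ.restrict (closure K) = μ.restrict K := by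
  refine le_antisymm (Measure.le_iff.2 fun s hs ↦ ?_) (Measure.restrict_mono_set μ subset_closure)
  have hclosure : closure K ⊆ sᶜ ∪ toMeasurable μ (K ∩ s) :=
    hK.closure_subset_measurableSet (hs.compl.union (measurableSet_toMeasurable _ _))
      ((Set.inter_subset _ _ _).1 (subset_toMeasurable _ _))
  calc
    μ.restrict (closure K) s = μ (closure K ∩ s) := by
      rw [Measure.restrict_apply hs, Set.inter_comm]
    _ ≤ μ (toMeasurable μ (K ∩ s)) := measure_mono ((Set.inter_subset _ _ _).2 hclosure)
    _ = μ.restrict K s := by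
      rw [measure_toMeasurable, Measure.restrict_apply hs, Set.inter_comm]

-- Outside Hausdorff spaces `K` need not be measurable, so `withDensity_apply` does not suffice.
theorem withDensity_apply_of_isCompact (μ : Measure X) (f : X → ℝ≥0∞) {K : Set X}
    (hK : IsCompact K) : μ.withDensity f K = ∫⁻ x in K, f x ∂μ := by
  rw [← hK.measure_closure, withDensity_apply _ isClosed_closure.measurableSet,
    restrict_closure_of_isCompact μ hK]

end CompactSets

theorem inv_subset_inv_mul_singleton {G : Type*} [Group G] {S L : Set G} {h : G}
    (hLS : h • L ⊆ S) : L⁻¹ ⊆ S⁻¹ * {h} := by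
  intro l hl
  have hmem : h * l⁻¹ ∈ S := hLS (Set.smul_mem_smul_set hl)
  simpa [Set.mul_singleton] using hmem

section InvMul

variable {G : Type*} [Group G] [MeasurableSpace G] [MeasurableMul G] [MeasurableInv G]

theorem setLIntegral_map_inv_comp_inv_mul (μ : Measure G) (f : G → ℝ≥0∞) (S : Set G) (h : G) :
    ∫⁻ g in S, f (g⁻¹ * h) ∂(μ.map (·⁻¹)) = ∫⁻ g in S⁻¹ * {h}, f g ∂(μ.map (· * h)) := by
  let e : G ≃ᵐ G := (MeasurableEquiv.inv G).trans (MeasurableEquiv.mulRight h)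
  have he : MeasurePreserving e (μ.map (·⁻¹)) (μ.map (· * h)) := by
    refine ⟨e.measurable, ?_⟩
    rw [Measure.map_map e.measurable measurable_inv]
    congr 1
    ext g
    simp [e]
  have himage : e '' S = S⁻¹ * {h} := by
    rw [Set.mul_singleton, ← Set.image_inv_eq_inv, Set.image_image]
    rfl
  rw [← himage]
  exact he.setLIntegral_comp_emb e.measurableEmbedding f S

end InvMul

section Haar

variable {G : Type*} [Group G] [TopologicalSpace G] [IsTopologicalGroup G]
  [LocallyCompactSpace G] [MeasurableSpace G] [BorelSpace G]

theorem restrict_map_mul_right_of_isCompact (μ : Measure G) [μ.IsHaarMeasure] (h : G)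
    {K : Set G} (hK : IsCompact K) :
    (μ.map (· * h)).restrict K = Measure.modularCharacterFun h • μ.restrict K := by
  ext s hs
  have := Measure.isHaarMeasure_map_mul_right μ h
  rw [Measure.smul_apply, Measure.restrict_apply hs, Measure.restrict_apply hs,
    Measure.modularCharacterFun_eq_haarScalarFactor μ h]
  exact Measure.measure_isMulInvariant_eq_smul_of_isCompact_closure _ μ
    (hK.closure_of_subset Set.inter_subset_right)

theorem setLIntegral_comp_inv_mul_eq_modularCharacterFun_mul (μ : Measure G) [μ.IsHaarMeasure]
    (f : G → ℝ≥0∞) {S : Set G} (hS : IsCompact S) (h : G) :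
    ∫⁻ g in S, f (g⁻¹ * h) ∂(μ.map (·⁻¹)) =
      Measure.modularCharacterFun h * μ.withDensity f (S⁻¹ * {h}) := by
  have hD : IsCompact (S⁻¹ * {h}) := hS.inv.mul isCompact_singleton
  rw [setLIntegral_map_inv_comp_inv_mul, restrict_map_mul_right_of_isCompact μ h hD,
    lintegral_smul_measure, withDensity_apply_of_isCompact μ f hD, ENNReal.smul_def, smul_eq_mul]

theorem setLIntegral_comp_inv_mul_mul_withDensity_inv_le (μ : Measure G) [μ.IsHaarMeasure]
    (p q : G → ℝ≥0∞) {S L : Set G} (hS : IsCompact S) {h : G} (hLS : h • L ⊆ S) :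
    (∫⁻ g in S, q (g⁻¹ * h) ∂(μ.map (·⁻¹))) * μ.withDensity p L⁻¹
      ≤ μ.withDensity q Set.univ * ∫⁻ g in S, p (g⁻¹ * h) ∂(μ.map (·⁻¹)) := by
  let D := S⁻¹ * {h}
  let c : ℝ≥0∞ := (Measure.modularCharacterFun h : ℝ≥0∞)
  calc
    _ = c * μ.withDensity q D * μ.withDensity p L⁻¹ := by
      rw [setLIntegral_comp_inv_mul_eq_modularCharacterFun_mul μ q hS h]
    _ ≤ c * μ.withDensity q Set.univ * μ.withDensity p D := by
      gcongr
      · exact Set.subset_univ D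
      · exact inv_subset_inv_mul_singleton hLS
    _ = μ.withDensity q Set.univ * (c * μ.withDensity p D) := by ring
    _ = _ := by rw [setLIntegral_comp_inv_mul_eq_modularCharacterFun_mul μ p hS h]

theorem lintegral_ratio_le_of_symmetric_compact_general (μ : Measure G) [μ.IsHaarMeasure]
    (p q : G → ℝ≥0∞) {S L : Set G} (hS : IsCompact S) {h : G} (hLS : h • L ⊆ S)
    (hpos : 0 < μ.withDensity p L⁻¹) (hfin : μ.withDensity p L⁻¹ ≠ ∞) :
    (∫⁻ g in S, q (g⁻¹ * h) ∂(μ.map (·⁻¹))) / (∫⁻ g in S, p (g⁻¹ * h) ∂(μ.map (·⁻¹)))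
      ≤ μ.withDensity q Set.univ / μ.withDensity p L⁻¹ := by
  refine ENNReal.div_le_of_le_mul ?_
  rw [ENNReal.mul_comm_div, ← mul_div_assoc,
    ENNReal.le_div_iff_mul_le (.inl hpos.ne') (.inl hfin)]
  exact setLIntegral_comp_inv_mul_mul_withDensity_inv_le μ p q hS hLS

end Haar

/-- **Lemma 15.** Let `G` be a locally compact group with left Haar measure `lam` and
right Haar measure `ρ = lam ∘ (·⁻¹)`.  Let `P` and `Q` be probability measures on `G` with
densities `p` and `q` with respect to `lam`, and write `p_g(h) = p (g⁻¹ h)`,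
`q_g(h) = q (g⁻¹ h)`.  Let `N, L` be compact subsets with `L` symmetric and `P L > 0`.
Then for every `h ∈ N`,
`(∫_{N L} q_g(h) dρ(g)) / (∫_{N L} p_g(h) dρ(g)) ≤ 1 / P L`. -/
theorem lintegral_ratio_le_of_symmetric_compact
    {G : Type*} [Group G] [TopologicalSpace G] [IsTopologicalGroup G]
    [LocallyCompactSpace G] [MeasurableSpace G] [BorelSpace G]
    (lam : Measure G) [lam.IsHaarMeasure]
    (p q : G → ℝ≥0∞) (hp : Measurable p) (hq : Measurable q)
    (P Q : Measure G) [IsProbabilityMeasure P] [IsProbabilityMeasure Q]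
    (hP : P = lam.withDensity p) (hQ : Q = lam.withDensity q)
    (N L : Set G) (hN : IsCompact N) (hL : IsCompact L)
    (hLsym : L = L⁻¹) (hLpos : 0 < P L) :
    ∀ h ∈ N,
      (∫⁻ g in N * L, q (g⁻¹ * h) ∂(lam.map (·⁻¹)))
          / (∫⁻ g in N * L, p (g⁻¹ * h) ∂(lam.map (·⁻¹)))
        ≤ 1 / P L := by
  intro h hh
  simpa [← hP, ← hQ, ← hLsym, hLpos] using lintegral_ratio_le_of_symmetric_compact_general
    lam p q (hN.mul hL) (Set.smul_set_subset_mul hh)
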